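/- Let A be the ring of integers of a number field K (a finite extension of Q). Let G be a finite subgroup of GL_2(A) acting linearly on R = A[X,Y] (fixing A). Assume that for every prime p dividing |G|, every Sylow p-subgroup of G has exponent p. Then the ring of invariants R^G is Cohen-Macaulay. -/

import Mathlib

/-- A Noetherian local ring is Cohen–Macaulay if it admits a regular sequence, consisting of
elements of the maximal ideal, whose length equals the Krull dimension of the ring. -/
def IsCohenMacaulayLocalRing (R : Type*) [CommRing R] [IsLocalRing R] : Prop :=
  ∃ (n : ℕ) (rs : List R), ringKrullDim R = n ∧ rs.length = n ∧
    (∀ x ∈ rs, x ∈ IsLocalRing.maximalIdeal R) ∧ RingTheory.Sequence.IsRegular R rs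

/-- A Noetherian ring is Cohen–Macaulay if all its localizations at prime ideals are
Cohen–Macaulay local rings. -/
def IsCohenMacaulayRing (R : Type*) [CommRing R] : Prop :=
  IsNoetherianRing R ∧
    ∀ (P : Ideal R) (_ : P.IsPrime), IsCohenMacaulayLocalRing (Localization.AtPrime P)

/-- The ring of invariants `R^G` of a subgroup `G ⊆ GL_n(A)` acting linearly on the
polynomial ring `R = A[X_1, …, X_n]` (fixing `A`), via the standard action of `GL_n(A)`
on the `A`-span of `X_1, …, X_n`. -/
noncomputable def glInvariants {A : Type*} [CommRing A] {n : ℕ}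
    (G : Subgroup (Matrix.GeneralLinearGroup (Fin n) A)) :
    Subalgebra A (MvPolynomial (Fin n) A) where
  carrier := {f | ∀ g ∈ G,
    MvPolynomial.aeval
      (fun i => ∑ j, ((g : Matrix (Fin n) (Fin n) A) i j) • MvPolynomial.X j) f = f}
  mul_mem' := by
    intro a b ha hb g hg
    rw [map_mul, ha g hg, hb g hg]
  add_mem' := by
    intro a b ha hb g hg
    rw [map_add, ha g hg, hb g hg]
  algebraMap_mem' := fun a g _ => MvPolynomial.aeval_C _ a

/-!
A prime `P` of a Noetherian ring has a Cohen–Macaulay localization as soon as `P` contains a regular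
sequence of length `ht P`. Localizing the Dedekind domain `A` below `P`, one may assume that it is a
field or a discrete valuation ring `O`. Heights in `R = O[X, Y]` and in `R^G` correspond, so `ht P`
is at most three. Sequences of length at most two exist because `R` is factorial and because a
regular pair of `R` consisting of invariants is still regular in `R^G`.

If `ht P = 3`, choose in `P` a uniformizer `π` and two invariants `a`, `b` that are coprime modulo
`π`. They form a regular sequence on `R`, and the obstruction to regularity on `R^G` is a class in
`H¹(G, R)` annihilated by an ideal modulo which `R` is integral over `O`. Such a class vanishes. It
suffices to see this on a Sylow `q`-subgroup `H` for the residue characteristic `q`. If `H` is not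
scalar, some non-scalar element commutes with all of `H`: for `q ≠ 2` a commutator that is scalar
has determinant one and odd order, hence is trivial, and for `q = 2` the group `H` is abelian. So
`H` becomes triangular over a finite extension of `O`, of which `O` is a retract as a module. For
triangular `H`, the class is killed by an invariant polynomial with unit leading coefficient in the
first variable, which can be cancelled by division with remainder.
-/

open RingTheory.Sequence groupCohomology MvPolynomial

open scoped commutatorElement MatrixGroups

section RegularSequences

variable {B S : Type*} [CommRing B] [CommRing S]

theorem isWeaklyRegular_singleton_iff_forall {a : B} :
    IsWeaklyRegular B [a] ↔ ∀ x, a * x = 0 → x = 0 := by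
  rw [isWeaklyRegular_singleton_iff, isSMulRegular_iff_right_eq_zero_of_smul]
  rfl

theorem isWeaklyRegular_concat_iff_forall {rs : List B} {c : B} :
    IsWeaklyRegular B (rs ++ [c]) ↔ IsWeaklyRegular B rs ∧
      ∀ x, c * x ∈ Ideal.ofList rs → x ∈ Ideal.ofList rs := by
  rw [isWeaklyRegular_append_iff, isWeaklyRegular_singleton_iff,
    isSMulRegular_quotient_iff_mem_of_smul_mem]
  simp only [smul_eq_mul, Ideal.mul_top]

theorem isWeaklyRegular_pair_iff {a b : B} :
    IsWeaklyRegular B [a, b] ↔ (∀ x, a * x = 0 → x = 0) ∧ ∀ x, a ∣ b * x → a ∣ x := by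
  rw [← List.singleton_append, isWeaklyRegular_concat_iff_forall,
    isWeaklyRegular_singleton_iff_forall]
  simp only [Ideal.ofList_singleton, Ideal.mem_span_singleton]

theorem isWeaklyRegular_triple_iff {a b c : B} :
    IsWeaklyRegular B [a, b, c] ↔ IsWeaklyRegular B [a, b] ∧
      ∀ x, c * x ∈ Ideal.span {a, b} → x ∈ Ideal.span {a, b} := by
  rw [show [a, b, c] = [a, b] ++ [c] from rfl, isWeaklyRegular_concat_iff_forall,
    Ideal.ofList_cons, Ideal.ofList_singleton, ← Ideal.span_insert]

theorem isWeaklyRegular_pair_of_isRelPrime [IsDomain S] [DecompositionMonoid S] {a b : S}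
    (ha : a ≠ 0) (hab : IsRelPrime a b) : IsWeaklyRegular S [a, b] :=
  isWeaklyRegular_pair_iff.2
    ⟨fun _ hx => (mul_eq_zero.1 hx).resolve_left ha, fun _ hx => hab.dvd_of_dvd_mul_left hx⟩

theorem isWeaklyRegular_triple_of_ker_eq_span {f : B →+* S} (hf : Function.Surjective f)
    {π a b : B} (hπ : ∀ x, π * x = 0 → x = 0) (hker : RingHom.ker f = Ideal.span {π})
    (hab : IsWeaklyRegular S [f a, f b]) : IsWeaklyRegular B [π, a, b] := by
  obtain ⟨ha, hb⟩ := isWeaklyRegular_pair_iff.1 hab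
  have hdvd : ∀ x, π ∣ x ↔ f x = 0 := fun x => by
    rw [← RingHom.mem_ker, hker, Ideal.mem_span_singleton]
  have hmem : ∀ x, x ∈ Ideal.span {π, a} ↔ f a ∣ f x := fun x => by
    rw [← Ideal.mem_span_singleton, ← Ideal.mem_comap, ← Set.image_singleton (f := f),
      ← Ideal.map_span, Ideal.comap_map_of_surjective f hf, ← RingHom.ker_eq_comap_bot, hker,
      Ideal.span_insert, sup_comm]
  refine isWeaklyRegular_triple_iff.2 ⟨isWeaklyRegular_pair_iff.2 ⟨hπ, fun x hx => ?_⟩,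
    fun x hx => ?_⟩
  · rw [hdvd, map_mul] at hx
    exact (hdvd x).2 (ha _ hx)
  · rw [hmem, map_mul] at hx
    exact (hmem x).2 (hb _ hx)

end RegularSequences

section PrimeAvoidance

variable {B S : Type*} [CommRing B] [CommRing S] [IsDomain S] [UniqueFactorizationMonoid S]

theorem exists_mem_forall_notMem_of_not_le {P : Ideal B} {s : Finset (Ideal B)}
    (hs : ∀ q ∈ s, q.IsPrime) (h : ∀ q ∈ s, ¬ P ≤ q) : ∃ b ∈ P, ∀ q ∈ s, b ∉ q := by
  by_contra! hcon
  obtain ⟨q, hq, hle⟩ := (Ideal.subset_union_prime (f := id) ⊥ ⊥ (fun q hq _ _ => hs q hq)).1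
    fun x hx => by simpa using hcon x hx
  exact h q hq hle

theorem exists_isRelPrime_of_forall_prime {f : B →+* S} {P : Ideal B} (hker : ¬ P ≤ RingHom.ker f)
    (h : ∀ l, Prime l → ¬ P ≤ (Ideal.span {l}).comap f) :
    ∃ a ∈ P, ∃ b ∈ P, f a ≠ 0 ∧ IsRelPrime (f a) (f b) := by
  classical
  obtain ⟨a, haP, ha : f a ≠ 0⟩ := SetLike.not_le_iff_exists.1 hker
  let s : Finset S := (UniqueFactorizationMonoid.factors (f a)).toFinset
  have hs : ∀ l ∈ s, Prime l := fun l hl =>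
    UniqueFactorizationMonoid.prime_of_factor l (Multiset.mem_toFinset.1 hl)
  obtain ⟨b, hbP, hb⟩ : ∃ b ∈ P, ∀ q ∈ s.image (fun l => (Ideal.span {l}).comap f), b ∉ q := by
    refine exists_mem_forall_notMem_of_not_le ?_ ?_ <;> intro q hq <;>
      obtain ⟨l, hl, rfl⟩ := Finset.mem_image.1 hq
    · have := (Ideal.span_singleton_prime (hs l hl).ne_zero).2 (hs l hl)
      exact Ideal.comap_isPrime f _
    · exact h l (hs l hl)
  refine ⟨a, haP, b, hbP, ha, (UniqueFactorizationMonoid.isRelPrime_iff_no_prime_factors ha).2 ?_⟩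
  intro p hpa hpb hp
  obtain ⟨l, hl, hpl⟩ := UniqueFactorizationMonoid.exists_mem_factors_of_dvd ha hp.irreducible hpa
  exact hb _ (Finset.mem_image_of_mem _ (Multiset.mem_toFinset.2 hl))
    (Ideal.mem_span_singleton.2 (hpl.symm.dvd.trans hpb))

end PrimeAvoidance

section CocycleClasses

variable (B : Type*) {G M : Type*} [CommRing B] [Group G] [AddCommGroup M] [Module B M]
  [DistribMulAction G M] [SMulCommClass G B M]

/-- The annihilator in `B` of the class in `H¹(G, M)` of a function `w : G → M`, that is, the ideal
of those `b` for which `b • w` is a coboundary. -/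
def classAnnihilator (w : G → M) : Ideal B where
  carrier := {b | IsCoboundary₁ (b • w)}
  zero_mem' := ⟨0, by simp⟩
  add_mem' := by
    rintro b c ⟨x, hx⟩ ⟨y, hy⟩
    refine ⟨x + y, fun g => ?_⟩
    rw [smul_add, add_smul, Pi.add_apply, ← hx, ← hy]
    abel
  smul_mem' := by
    rintro c b ⟨x, hx⟩
    exact ⟨c • x, fun g => by rw [smul_comm, ← smul_sub, hx, smul_eq_mul, mul_smul]; rfl⟩

variable {B}

theorem mem_classAnnihilator {w : G → M} {b : B} :
    b ∈ classAnnihilator B w ↔ IsCoboundary₁ (b • w) :=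
  Iff.rfl

end CocycleClasses

section InvariantExtensions

open scoped Pointwise

variable {B R : Type*} [CommRing B] [CommRing R] [Algebra B R]

theorem exists_isCocycle₁_of_smul_add_eq {G : Type*} [Group G] [MulSemiringAction G R]
    [SMulCommClass G B R] {a b : B} (h : IsWeaklyRegular R [algebraMap B R a, algebraMap B R b])
    {u v : R} (huv : ∀ g : G, g • (a • u + b • v) = a • u + b • v) :
    ∃ w : G → R, IsCocycle₁ w ∧ (∀ g, g • v - v = a • w g) ∧ ∀ g, g • u - u = -(b • w g) := by
  obtain ⟨ha, hb⟩ := isWeaklyRegular_pair_iff.1 h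
  simp only [Algebra.smul_def] at huv ⊢
  have ha_cancel : ∀ x y, algebraMap B R a * x = algebraMap B R a * y → x = y := fun x y hxy =>
    sub_eq_zero.1 (ha _ (by rw [mul_sub, hxy, sub_self]))
  have hsyz : ∀ g : G,
      algebraMap B R a * (g • u - u) + algebraMap B R b * (g • v - v) = 0 := fun g => by
    have := huv g
    rw [smul_add, smul_mul', smul_mul', smul_algebraMap, smul_algebraMap] at this
    linear_combination this
  choose w hw using fun g : G => hb (g • v - v) ⟨-(g • u - u), by linear_combination hsyz g⟩
  refine ⟨w, fun g k => ha_cancel _ _ ?_, hw, fun g => ha_cancel _ _ ?_⟩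
  · have hk := congrArg (g • ·) (hw k)
    simp only [smul_sub, smul_mul', smul_algebraMap] at hk
    have hgk := hw (g * k)
    rw [mul_smul] at hgk
    linear_combination hk + hw g - hgk
  · linear_combination hsyz g - algebraMap B R b * hw g

variable (G : Type*) [Group G] [MulSemiringAction G R] [FaithfulSMul B R] [SMulCommClass G B R]

section Height

variable [Finite G]

theorem hasGoingDown_of_isInvariant [Algebra.IsInvariant B R G] : Algebra.HasGoingDown B R := by
  have := Algebra.IsInvariant.isIntegral B R G
  refine ⟨fun {p} _ Q _ hpQ => ?_⟩
  obtain ⟨Q₁, _, hQ₁⟩ := Ideal.nonempty_primesOver (S := R) p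
  obtain ⟨Q₂, hQ₁₂, _, hQ₂⟩ := Ideal.exists_ideal_over_prime_of_isIntegral_of_isPrime
    (S := R) (Q.under B) Q₁ (hQ₁.over.symm.trans_le hpQ.le)
  obtain ⟨g, rfl⟩ := Algebra.IsInvariant.exists_smul_of_under_eq B R G Q₂ Q hQ₂
  exact ⟨g • Q₁, Ideal.pointwise_smul_le_pointwise_smul_iff.2 hQ₁₂, ‹Q₁.IsPrime›.smul g,
    Ideal.LiesOver.smul g⟩

theorem height_under_of_isInvariant [Algebra.IsInvariant B R G] [IsNoetherianRing B]
    [IsNoetherianRing R] (Q : Ideal R) [Q.IsPrime] : (Q.under B).height = Q.height := by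
  have := Algebra.IsInvariant.isIntegral B R G
  have := hasGoingDown_of_isInvariant (B := B) (R := R) G
  set I := (Q.under B).map (algebraMap B R)
  have hmin : Q ∈ I.minimalPrimes := Ideal.IsIntegral.mem_minimalPrimes_map_under Q
  have hprime : (Q.map (Ideal.Quotient.mk I)).IsPrime :=
    Ideal.map_isPrime_of_surjective Ideal.Quotient.mk_surjective (by simpa using hmin.1.2)
  have hfibre : (Q.map (Ideal.Quotient.mk I)).height = 0 := by
    rw [Ideal.height_eq_zero_iff]
    change _ ∈ (⊥ : Ideal (R ⧸ I)).minimalPrimes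
    rw [← Ideal.map_quotient_self I,
      Ideal.minimalPrimes_map_of_surjective Ideal.Quotient.mk_surjective, Ideal.mk_ker, sup_idem]
    exact Set.mem_image_of_mem _ hmin
  rw [Ideal.height_eq_height_add_of_liesOver_of_hasGoingDown (Q.under B) Q, hfibre, add_zero]

end Height

theorem isWeaklyRegular_pair_of_isInvariant [Algebra.IsInvariant B R G] {a b : B}
    (h : IsWeaklyRegular R [algebraMap B R a, algebraMap B R b]) : IsWeaklyRegular B [a, b] := by
  have hinj := FaithfulSMul.algebraMap_injective B R
  obtain ⟨ha, hb⟩ := isWeaklyRegular_pair_iff.1 h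
  refine isWeaklyRegular_pair_iff.2 ⟨fun x hx => hinj ?_, fun x hx => ?_⟩
  · rw [map_zero]
    exact ha _ (by rw [← map_mul, hx, map_zero])
  · obtain ⟨z, hz⟩ := hb (algebraMap B R x) (by rw [← map_mul]; exact map_dvd _ hx)
    obtain ⟨z, rfl⟩ := Algebra.IsInvariant.isInvariant (A := B) (G := G) z fun g =>
      sub_eq_zero.1 <| ha _ <| by
        rw [mul_sub, ← hz, ← smul_algebraMap g a, ← smul_mul', ← hz, smul_algebraMap, sub_self]
    exact ⟨z, hinj (by rw [hz, map_mul])⟩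

theorem mem_span_pair_of_isCoboundary₁ [Algebra.IsInvariant B R G] {a b x : B} {u v : R}
    {w : G → R} (hx : a • u + b • v = algebraMap B R x) (hwv : ∀ g, g • v - v = a • w g)
    (hwu : ∀ g, g • u - u = -(b • w g)) (hw : IsCoboundary₁ w) : x ∈ Ideal.span {a, b} := by
  obtain ⟨t, ht⟩ := hw
  obtain ⟨v', hv'⟩ := Algebra.IsInvariant.isInvariant (A := B) (G := G) (v - a • t) fun g => by
    rw [smul_sub, smul_comm, eq_add_of_sub_eq (hwv g), eq_add_of_sub_eq (ht g), smul_add]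
    abel
  obtain ⟨u', hu'⟩ := Algebra.IsInvariant.isInvariant (A := B) (G := G) (u + b • t) fun g => by
    rw [smul_add, smul_comm, eq_add_of_sub_eq (hwu g), eq_add_of_sub_eq (ht g), smul_add]
    abel
  refine Ideal.mem_span_pair.2 ⟨u', v', FaithfulSMul.algebraMap_injective B R ?_⟩
  rw [map_add, map_mul, map_mul, hu', hv', ← hx]
  simp only [Algebra.smul_def]
  ring

theorem isWeaklyRegular_triple_of_isInvariant [Algebra.IsInvariant B R G] {a b c : B}
    (h : IsWeaklyRegular R [algebraMap B R a, algebraMap B R b, algebraMap B R c])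
    (hcoh : ∀ w : G → R, IsCocycle₁ w → Ideal.span {a, b, c} ≤ classAnnihilator B w →
      IsCoboundary₁ w) : IsWeaklyRegular B [a, b, c] := by
  obtain ⟨hpair, hc⟩ := isWeaklyRegular_triple_iff.1 h
  obtain ⟨ha, hb⟩ := isWeaklyRegular_pair_iff.1 hpair
  refine isWeaklyRegular_triple_iff.2
    ⟨isWeaklyRegular_pair_of_isInvariant G hpair, fun x hx => ?_⟩
  obtain ⟨d, e, hde⟩ := Ideal.mem_span_pair.1 hx
  have hde' := congrArg (algebraMap B R) hde
  simp only [map_add, map_mul] at hde'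
  obtain ⟨u, v, huv⟩ := Ideal.mem_span_pair.1 <| hc (algebraMap B R x) <|
    Ideal.mem_span_pair.2 ⟨_, _, hde'⟩
  have hx_eq : a • u + b • v = algebraMap B R x := by
    simp only [Algebra.smul_def]
    linear_combination huv
  obtain ⟨w, hw, hwv, hwu⟩ := exists_isCocycle₁_of_smul_add_eq (G := G) hpair (u := u) (v := v)
    fun g => by rw [hx_eq, smul_algebraMap]
  have hcw : IsCoboundary₁ (c • w) := by
    obtain ⟨z, hz⟩ := hb (algebraMap B R c * v - algebraMap B R e)
      ⟨algebraMap B R d - algebraMap B R c * u,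
        by linear_combination algebraMap B R c * huv - hde'⟩
    refine ⟨z, fun g => sub_eq_zero.1 (ha _ ?_)⟩
    have hg := congrArg (g • ·) hz
    simp only [smul_sub, smul_mul', smul_algebraMap] at hg
    have hv := hwv g
    rw [Algebra.smul_def] at hv
    rw [Pi.smul_apply, Algebra.smul_def]
    linear_combination hz - hg + algebraMap B R c * hv
  refine mem_span_pair_of_isCoboundary₁ G hx_eq hwv hwu <| hcoh w hw <| Ideal.span_le.2 <| by
    rintro y (rfl | rfl | rfl)
    · exact ⟨v, hwv⟩
    · exact ⟨-u, fun g => by rw [Pi.smul_apply, smul_neg]; linear_combination -hwu g⟩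
    · exact hcw

end InvariantExtensions

section GradeEqHeight

theorem height_comap_span_singleton_le_two {R S : Type*} [CommRing R]
    [IsNoetherianRing R] [CommRing S] {f : R →+* S} (hf : Function.Surjective f)
    {π : R} (hker : RingHom.ker f = Ideal.span {π}) {l : S} (hl : Prime l) :
    ((Ideal.span {l}).comap f).height ≤ 2 := by
  classical
  have := (Ideal.span_singleton_prime hl.ne_zero).2 hl
  obtain ⟨l, rfl⟩ := hf l
  have hspan : (Ideal.span {f l}).comap f = Ideal.span (({π, l} : Finset R) : Set R) := by
    rw [← Set.image_singleton, ← Ideal.map_span, Ideal.comap_map_of_surjective f hf,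
      ← RingHom.ker_eq_comap_bot, hker, Finset.coe_insert, Finset.coe_singleton,
      Ideal.span_insert, sup_comm]
  refine (Ideal.height_le_card_of_mem_minimalPrimes_span_finset (s := {π, l}) ?_).trans
    (mod_cast Finset.card_le_two)
  rw [← hspan, Ideal.minimalPrimes_eq_subsingleton_self]
  rfl

/-- The ideal `P` contains a weakly regular sequence whose length is the height of `P`. For a prime
`P` this makes the localization at `P` Cohen–Macaulay. -/
def HasGradeEqHeight {B : Type*} [CommRing B] (P : Ideal B) : Prop :=
  ∃ rs : List B, (∀ x ∈ rs, x ∈ P) ∧ IsWeaklyRegular B rs ∧ (rs.length : ℕ∞) = P.height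

variable {B R : Type*} (G : Type*) [CommRing B] [CommRing R] [Group G] [Finite G]
  [MulSemiringAction G R] [Algebra B R] [FaithfulSMul B R] [SMulCommClass G B R]
  [IsNoetherianRing B] [IsNoetherianRing R] [IsDomain R]

theorem exists_isWeaklyRegular_pair_of_one_lt_height [Algebra.IsInvariant B R G]
    [UniqueFactorizationMonoid R] {P : Ideal B} (hP : 1 < P.height) :
    ∃ a ∈ P, ∃ b ∈ P, IsWeaklyRegular B [a, b] := by
  have hinj := FaithfulSMul.algebraMap_injective B R
  have := hinj.isDomain
  obtain ⟨a, haP, b, hbP, ha, hab⟩ := exists_isRelPrime_of_forall_prime (f := algebraMap B R)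
    (P := P)
    (fun hle => by
      rw [(RingHom.injective_iff_ker_eq_bot _).1 hinj] at hle
      rw [le_bot_iff.1 hle, Ideal.height_bot] at hP
      exact not_lt_zero hP)
    (fun l hl hle => by
      have := (Ideal.span_singleton_prime hl.ne_zero).2 hl
      refine hP.not_ge ((Ideal.height_mono hle).trans ?_)
      exact (height_under_of_isInvariant G _).trans_le
        (Ideal.height_span_singleton_le_one hl.not_isUnit))
  exact ⟨a, haP, b, hbP,
    isWeaklyRegular_pair_of_isInvariant G (isWeaklyRegular_pair_of_isRelPrime ha hab)⟩

theorem hasGradeEqHeight_of_height_le_two [Algebra.IsInvariant B R G]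
    [UniqueFactorizationMonoid R] {P : Ideal B} (hP : P.height ≤ 2) : HasGradeEqHeight P := by
  have := (FaithfulSMul.algebraMap_injective B R).isDomain
  obtain h0 | h1 | h2 : P.height = 0 ∨ P.height = 1 ∨ 1 < P.height := by
    rcases lt_trichotomy P.height 1 with h | h | h
    · exact .inl (Order.lt_one_iff.1 h)
    · exact .inr (.inl h)
    · exact .inr (.inr h)
  · exact ⟨[], by simp, .nil B B, by simp [h0]⟩
  · obtain ⟨a, haP, ha⟩ := P.ne_bot_iff.1 fun h => by simp [h] at h1
    exact ⟨[a], by simpa using haP,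
      isWeaklyRegular_singleton_iff_forall.2 fun x hx => (mul_eq_zero.1 hx).resolve_left ha,
      by simp [h1]⟩
  · obtain ⟨a, haP, b, hbP, hab⟩ := exists_isWeaklyRegular_pair_of_one_lt_height (R := R) G h2
    exact ⟨[a, b], by simp [haP, hbP], hab, (hP.antisymm (Order.add_one_le_of_lt h2)).symm⟩

theorem exists_isWeaklyRegular_triple_of_two_lt_height [Algebra.IsInvariant B R G]
    {S : Type*} [CommRing S] [IsDomain S] [UniqueFactorizationMonoid S] {P : Ideal B}
    (hP : 2 < P.height) {f : R →+* S} (hf : Function.Surjective f) {π : B} (hπ : π ≠ 0)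
    (hker : RingHom.ker f = Ideal.span {algebraMap B R π})
    (hcoh : ∀ a b : B, f (algebraMap B R a) ≠ 0 →
      IsRelPrime (f (algebraMap B R a)) (f (algebraMap B R b)) → ∀ w : G → R, IsCocycle₁ w →
      Ideal.span {π, a, b} ≤ classAnnihilator B w → IsCoboundary₁ w) :
    ∃ a ∈ P, ∃ b ∈ P, IsWeaklyRegular B [π, a, b] := by
  have hkerPrime : (RingHom.ker f).IsPrime := RingHom.ker_isPrime f
  have hπ_nonunit : ¬IsUnit (algebraMap B R π) := fun h =>
    hkerPrime.ne_top (hker.trans (Ideal.span_singleton_eq_top.2 h))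
  obtain ⟨a, haP, b, hbP, ha, hab⟩ := exists_isRelPrime_of_forall_prime
    (f := f.comp (algebraMap B R)) (P := P)
    (fun hle => by
      have hle' : P ≤ (RingHom.ker f).under B := hle
      refine hP.not_ge ((Ideal.height_mono hle').trans ?_)
      rw [height_under_of_isInvariant G, hker]
      exact (Ideal.height_span_singleton_le_one hπ_nonunit).trans one_le_two)
    (fun l hl hle => by
      have := (Ideal.span_singleton_prime hl.ne_zero).2 hl
      refine hP.not_ge ((Ideal.height_mono hle).trans ?_)
      exact (height_under_of_isInvariant G ((Ideal.span {l}).comap f)).trans_le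
        (height_comap_span_singleton_le_two hf hker hl))
  refine ⟨a, haP, b, hbP, isWeaklyRegular_triple_of_isInvariant G
    (isWeaklyRegular_triple_of_ker_eq_span hf (fun x hx => ?_) hker
      (isWeaklyRegular_pair_of_isRelPrime ha hab)) (hcoh a b ha hab)⟩
  exact (mul_eq_zero.1 hx).resolve_left
    ((map_ne_zero_iff _ (FaithfulSMul.algebraMap_injective B R)).2 hπ)

end GradeEqHeight

section Coboundaries

variable {G M : Type*} [Group G] [AddCommGroup M] [DistribMulAction G M]

theorem isCoboundary₁_of_equivariant_retraction {M' : Type*} [AddCommGroup M']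
    [DistribMulAction G M'] {ι : M → M'} {r : M' →+ M} (hr : ∀ (g : G) x, r (g • x) = g • r x)
    (hrι : ∀ x, r (ι x) = x) {w : G → M} (hw : IsCoboundary₁ (ι ∘ w)) : IsCoboundary₁ w := by
  obtain ⟨z, hz⟩ := hw
  exact ⟨r z, fun g => by rw [← hr, ← map_sub, hz, Function.comp_apply, hrι]⟩

/-- A cocycle vanishing on `H` is a function on `G ⧸ H`, and the sum of its values trivializes
`H.index` times its class. -/
theorem index_smul_isCoboundary₁_of_eq_zero (H : Subgroup G) [H.FiniteIndex] {w : G → M}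
    (hw : IsCocycle₁ w) (hH : ∀ h ∈ H, w h = 0) : IsCoboundary₁ (H.index • w) := by
  let W : G ⧸ H → M := Quotient.lift w fun g g' hgg' => by
    have hcoset := hw g (g⁻¹ * g')
    rw [hH _ (QuotientGroup.leftRel_apply.1 hgg'), smul_zero, zero_add,
      mul_inv_cancel_left] at hcoset
    exact hcoset.symm
  have hW : ∀ (g : G) x, W (g • x) = g • W x + w g := fun g x =>
    QuotientGroup.induction_on x (hw g)
  have := Fintype.ofFinite (G ⧸ H)
  refine ⟨-∑ x, W x, fun g => ?_⟩
  have hsum : ∑ x, W x = g • ∑ x, W x + H.index • w g := by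
    calc ∑ x, W x = ∑ x, W (g • x) := (Equiv.sum_comp (MulAction.toPerm g) W).symm
      _ = g • ∑ x, W x + H.index • w g := by
        simp only [hW]
        rw [Finset.sum_add_distrib, Finset.sum_const, ← Finset.smul_sum, Finset.card_univ,
          Subgroup.index_eq_card, Nat.card_eq_fintype_card]
  rw [smul_neg, Pi.smul_apply, sub_neg_eq_add, neg_add_eq_sub, sub_eq_iff_eq_add']
  exact hsum

theorem isCoboundary₁_of_index_isUnit {k : Type*} [CommRing k] [Module k M] [SMulCommClass G k M]
    (H : Subgroup G) [H.FiniteIndex] (hindex : IsUnit (H.index : k)) {w : G → M}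
    (hw : IsCocycle₁ w) (hH : IsCoboundary₁ fun h : H => w h) : IsCoboundary₁ w := by
  obtain ⟨z, hz⟩ := hH
  have hw' : IsCocycle₁ fun g => w g - (g • z - z) := fun g h => by
    simp only [hw g h, smul_sub, mul_smul]
    abel
  obtain ⟨y, hy⟩ := index_smul_isCoboundary₁_of_eq_zero H hw' fun h hh =>
    sub_eq_zero.2 (hz ⟨h, hh⟩).symm
  obtain ⟨c, hc⟩ := hindex.exists_left_inv
  refine ⟨z + c • y, fun g => ?_⟩
  have hcy : c • (g • y - y) = w g - (g • z - z) := by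
    rw [hy, Pi.smul_apply, ← Nat.cast_smul_eq_nsmul k, smul_smul, hc, one_smul]
  rw [smul_add, smul_comm g c, add_sub_add_comm, ← smul_sub, hcy, add_sub_cancel]

/-- Cancelling an invariant factor `F` by division with remainder: a coboundary `F * w` is the
coboundary of the quotient because the remainders form a stable subgroup meeting `F * R` in `0`. -/
theorem isCoboundary₁_of_mul_of_division {R : Type*} [CommRing R] [MulSemiringAction G R] {F : R}
    (hF : ∀ g : G, g • F = F) {N : AddSubgroup R} (hN : ∀ (g : G), ∀ r ∈ N, g • r ∈ N)
    (hdiv : ∀ z, ∃ q, ∃ r ∈ N, z = F * q + r) (hdisj : ∀ x, F * x ∈ N → x = 0) {w : G → R}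
    (hw : IsCoboundary₁ fun g => F * w g) : IsCoboundary₁ w := by
  obtain ⟨z, hz⟩ := hw
  obtain ⟨q, r, hr, rfl⟩ := hdiv z
  refine ⟨q, fun g => (sub_eq_zero.1 (hdisj _ ?_)).symm⟩
  have hrem : F * (w g - (g • q - q)) = g • r - r := by
    have := hz g
    rw [smul_add, smul_mul', hF] at this
    linear_combination -this
  rw [hrem]
  exact N.sub_mem (hN g r hr) hr

end Coboundaries

theorem mem_radical_of_algebraMap_mem_map {B R : Type*} [CommRing B] [CommRing R] [Algebra B R]
    [FaithfulSMul B R] [Algebra.IsIntegral B R] {I : Ideal B} {b : B}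
    (hb : algebraMap B R b ∈ I.map (algebraMap B R)) : b ∈ I.radical := by
  rw [Ideal.radical_eq_sInf, Ideal.mem_sInf]
  rintro q ⟨hIq, _⟩
  obtain ⟨Q, _, ⟨rfl⟩⟩ := Ideal.nonempty_primesOver (S := R) q
  exact Ideal.map_le_iff_le_comap.2 hIq hb

section LinearAction

variable {σ O : Type*} [Fintype σ] [DecidableEq σ] [CommRing O]

/-- The action of `GL σ O` on `O[X_i]` by linear substitutions. The matrix is inverted because
substituting the rows of a matrix is contravariant in the matrix. -/
noncomputable instance glMulSemiringAction : MulSemiringAction (GL σ O) (MvPolynomial σ O) where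
  smul g f := bind₁ (↑g⁻¹ : Matrix σ σ O).toMvPolynomial f
  one_smul f := by
    change bind₁ _ f = f
    simp [Matrix.toMvPolynomial_one]
  mul_smul g h f := by
    change bind₁ _ f = bind₁ _ (bind₁ _ f)
    rw [bind₁_bind₁, mul_inv_rev, Units.val_mul]
    congr 2
    exact funext fun i => Matrix.toMvPolynomial_mul _ _ i
  smul_zero _ := map_zero (bind₁ _)
  smul_add _ := map_add (bind₁ _)
  smul_one _ := map_one (bind₁ _)
  smul_mul _ := map_mul (bind₁ _)

theorem gl_smul_def (g : GL σ O) (f : MvPolynomial σ O) :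
    g • f = bind₁ (↑g⁻¹ : Matrix σ σ O).toMvPolynomial f :=
  rfl

instance : SMulCommClass (GL σ O) O (MvPolynomial σ O) :=
  ⟨fun _ c f => map_smul (bind₁ _) c f⟩

theorem map_gl_smul {O' : Type*} [CommRing O'] (φ : O →+* O') (g : GL σ O)
    (f : MvPolynomial σ O) :
    map φ (g • f) = Matrix.GeneralLinearGroup.map φ g • map φ f := by
  rw [gl_smul_def, gl_smul_def, map_bind₁]
  congr 2
  exact funext fun i => (Matrix.toMvPolynomial_map _ _ i).symm

end LinearAction

section DegreeBounds

variable {D : Type*} [CommRing D]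

theorem exists_eq_mul_add_of_isUnit_leadingCoeff [Nontrivial D] {F : Polynomial D}
    (hF : IsUnit F.leadingCoeff) (z : Polynomial D) :
    ∃ q r, z = F * q + r ∧ r.degree < F.degree := by
  set c := hF.unit⁻¹
  have hmonic : (c • F).Monic := Polynomial.monic_of_isUnit_leadingCoeff_inv_smul hF
  refine ⟨c • (z /ₘ (c • F)), z %ₘ (c • F), ?_, ?_⟩
  · rw [mul_smul_comm, ← smul_mul_assoc, add_comm, Polynomial.modByMonic_add_div]
  · rw [← Polynomial.degree_smul_of_smul_regular F (isSMulRegular_of_group c)]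
    exact Polynomial.degree_modByMonic_lt z hmonic

theorem degreeOf_algHom_le {σ : Type*} [DecidableEq σ] {i : σ}
    {φ : MvPolynomial σ D →ₐ[D] MvPolynomial σ D}
    (hφ : ∀ j, degreeOf i (φ (X j)) ≤ if j = i then 1 else 0) (f : MvPolynomial σ D) :
    degreeOf i (φ f) ≤ degreeOf i f := by
  conv_lhs => rw [f.as_sum, map_sum]
  refine (degreeOf_sum_le ..).trans (Finset.sup_le fun m hm => le_trans ?_
    (monomial_le_degreeOf i hm))
  rw [monomial_eq, map_mul, algHom_C, algebraMap_eq, Finsupp.prod, map_prod]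
  simp only [map_pow]
  refine (degreeOf_C_mul_le ..).trans ((degreeOf_prod_le ..).trans ?_)
  calc ∑ j ∈ m.support, degreeOf i (φ (X j) ^ m j)
      ≤ ∑ j ∈ m.support, if j = i then m j else 0 := Finset.sum_le_sum fun j _ => by
        refine (degreeOf_pow_le ..).trans ((Nat.mul_le_mul_left _ (hφ j)).trans ?_)
        rw [mul_ite, mul_one, mul_zero]
    _ ≤ m i := by
        rw [Finset.sum_ite_eq']
        split_ifs <;> simp

end DegreeBounds

section Triangular

variable {O : Type*} [CommRing O] {n : ℕ}

theorem isUnit_apply_zero_zero_of_forall_succ {g : GL (Fin (n + 1)) O}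
    (hg : ∀ i : Fin n, g i.succ 0 = 0) : IsUnit (g 0 0) := by
  have h := congrFun₂ g.inv_mul 0 0
  rw [Matrix.mul_apply, Fin.sum_univ_succ, Matrix.one_apply_eq] at h
  simp only [hg, mul_zero, Finset.sum_const_zero, add_zero] at h
  exact .of_mul_eq_one_right _ h

theorem degreeOf_zero_gl_smul_le [Nontrivial O] {g : GL (Fin (n + 1)) O}
    (hg : ∀ i : Fin n, (g⁻¹ : GL (Fin (n + 1)) O) i.succ 0 = 0)
    (f : MvPolynomial (Fin (n + 1)) O) : degreeOf 0 (g • f) ≤ degreeOf 0 f := by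
  refine degreeOf_algHom_le (fun j => ?_) f
  rw [bind₁_X_right, Matrix.toMvPolynomial]
  refine (degreeOf_sum_le ..).trans (Finset.sup_le fun k _ => ?_)
  obtain rfl | hk := eq_or_ne k 0
  · obtain rfl | ⟨i, rfl⟩ := j.eq_zero_or_eq_succ
    · rw [if_pos rfl, ← C_mul_X_eq_monomial]
      exact (degreeOf_C_mul_le ..).trans (degreeOf_X_self 0).le
    · rw [hg, monomial_zero, degreeOf_zero]
      exact Nat.zero_le _
  · rw [← C_mul_X_eq_monomial]
    exact (degreeOf_C_mul_le ..).trans (by rw [degreeOf_X_of_ne hk.symm]; exact Nat.zero_le _)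

theorem finSuccEquiv_gl_smul_X_zero (g : GL (Fin (n + 1)) O) :
    ∃ v, finSuccEquiv O n (g • X 0) =
      .C (C ((g⁻¹ : GL (Fin (n + 1)) O) 0 0)) * .X + .C v := by
  refine ⟨∑ j : Fin n, C ((g⁻¹ : GL (Fin (n + 1)) O) 0 j.succ) * X j, ?_⟩
  rw [gl_smul_def, bind₁_X_right, Matrix.toMvPolynomial, Fin.sum_univ_succ]
  have hC : ∀ c, finSuccEquiv O n (C c) = Polynomial.C (C c) := fun c => by
    rw [finSuccEquiv_apply, eval₂Hom_C]
    rfl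
  simp only [← C_mul_X_eq_monomial, map_add, map_mul, map_sum, finSuccEquiv_X_zero,
    finSuccEquiv_X_succ, hC]

theorem leadingCoeff_aeval_of_monic {D : Type*} [CommRing D] [NoZeroDivisors D] [Algebra O D]
    {T : Polynomial D} (hT : T.natDegree ≠ 0) {p : Polynomial O} (hp : p.Monic) :
    (Polynomial.aeval T p).leadingCoeff = T.leadingCoeff ^ p.natDegree := by
  have hcomp : Polynomial.aeval T p = (p.map (algebraMap O D)).comp T := by
    rw [Polynomial.comp, Polynomial.eval₂_map, Polynomial.aeval_def]
    rfl
  nontriviality D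
  rw [hcomp, Polynomial.leadingCoeff_comp hT, (hp.map _).leadingCoeff, one_mul,
    hp.natDegree_map]

variable {H : Type*} [Group H] [MulSemiringAction H (MvPolynomial (Fin (n + 1)) O)]
  {τ : H →* GL (Fin (n + 1)) O}

theorem isCoboundary₁_of_mul_of_isUnit_leadingCoeff [IsDomain O]
    (hτ : ∀ (h : H) (f : MvPolynomial (Fin (n + 1)) O), h • f = τ h • f)
    (htri : ∀ h (i : Fin n), τ h i.succ 0 = 0) {F : MvPolynomial (Fin (n + 1)) O}
    (hF : ∀ h : H, h • F = F) (hlead : IsUnit (finSuccEquiv O n F).leadingCoeff)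
    {w : H → MvPolynomial (Fin (n + 1)) O} (hw : IsCoboundary₁ fun h => F * w h) :
    IsCoboundary₁ w := by
  have hF0 : F ≠ 0 := fun h => by simp [h] at hlead
  have hlt : ∀ r, (finSuccEquiv O n r).degree < (finSuccEquiv O n F).degree ↔
      r = 0 ∨ degreeOf 0 r < degreeOf 0 F := fun r => by
    obtain rfl | hr := eq_or_ne r 0
    · simp [degree_finSuccEquiv hF0]
    · simp [degree_finSuccEquiv hF0, degree_finSuccEquiv hr, hr]
  let N : AddSubgroup (MvPolynomial (Fin (n + 1)) O) :=
    (Polynomial.degreeLT _ (finSuccEquiv O n F).natDegree).toAddSubgroup.comap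
      (finSuccEquiv O n).toAlgHom.toRingHom.toAddMonoidHom
  have hN : ∀ r, r ∈ N ↔ r = 0 ∨ degreeOf 0 r < degreeOf 0 F := fun r => by
    rw [← hlt, Polynomial.degree_eq_natDegree (EmbeddingLike.map_ne_zero_iff.2 hF0)]
    exact Polynomial.mem_degreeLT
  refine isCoboundary₁_of_mul_of_division hF (N := N) (fun h r hr => ?_) (fun z => ?_)
    (fun x hx => ?_) hw
  · rw [hN] at hr ⊢
    refine hr.imp (fun h0 => by rw [h0, smul_zero]) (lt_of_le_of_lt ?_)
    rw [hτ]
    exact degreeOf_zero_gl_smul_le (fun i => by rw [← map_inv, htri]) r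
  · obtain ⟨q, r, hz, hr⟩ := exists_eq_mul_add_of_isUnit_leadingCoeff hlead (finSuccEquiv O n z)
    refine ⟨(finSuccEquiv O n).symm q, (finSuccEquiv O n).symm r, (hN _).2 ((hlt _).1 ?_),
      (finSuccEquiv O n).injective ?_⟩
    · rwa [AlgEquiv.apply_symm_apply]
    · rw [hz, map_add, map_mul, AlgEquiv.apply_symm_apply, AlgEquiv.apply_symm_apply]
  · by_contra hx0
    have hFx := (hlt _).2 ((hN _).1 hx)
    rw [map_mul, Polynomial.degree_mul, degree_finSuccEquiv hF0, degree_finSuccEquiv hx0] at hFx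
    norm_cast at hFx
    lia

theorem isUnit_leadingCoeff_finSuccEquiv_prod_smul [IsDomain O] [Fintype H]
    (hτ : ∀ (h : H) (f : MvPolynomial (Fin (n + 1)) O), h • f = τ h • f)
    (htri : ∀ h (i : Fin n), τ h i.succ 0 = 0) :
    (finSuccEquiv O n (∏ h : H, h • X 0)).natDegree ≠ 0 ∧
      IsUnit (finSuccEquiv O n (∏ h : H, h • X 0)).leadingCoeff := by
  have hX : ∀ h : H, (finSuccEquiv O n (h • X 0)).natDegree = 1 ∧
      IsUnit (finSuccEquiv O n (h • X 0)).leadingCoeff := fun h => by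
    obtain ⟨v, hv⟩ := finSuccEquiv_gl_smul_X_zero (τ h)
    have hu : IsUnit (C ((τ h)⁻¹ 0 0) : MvPolynomial (Fin n) O) :=
      (isUnit_apply_zero_zero_of_forall_succ fun i => by rw [← map_inv, htri]).map C
    rw [hτ, hv, Polynomial.natDegree_linear hu.ne_zero, Polynomial.leadingCoeff_linear hu.ne_zero]
    exact ⟨rfl, hu⟩
  rw [map_prod, Polynomial.natDegree_prod _ _ fun h _ h0 => by simpa [h0] using (hX h).1,
    Polynomial.leadingCoeff_prod]
  exact ⟨by simp [hX], IsUnit.prod_univ_iff.2 fun h => (hX h).2⟩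

/-- A class of `H¹(H, O[X₀, …, Xₙ])` vanishes if its annihilator `J` is so large that
`O[X₀, …, Xₙ] / J` is integral over `O`: a monic polynomial over `O` in the orbit product of `X₀`
lies in `J`, and it can be cancelled by division with remainder in `X₀`. -/
theorem isCoboundary₁_of_triangular [IsDomain O] [Finite H] {B : Type*} [CommRing B]
    [Algebra B (MvPolynomial (Fin (n + 1)) O)] [FaithfulSMul B (MvPolynomial (Fin (n + 1)) O)]
    [SMulCommClass H B (MvPolynomial (Fin (n + 1)) O)]
    [Algebra.IsInvariant B (MvPolynomial (Fin (n + 1)) O) H]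
    (hτ : ∀ (h : H) (f : MvPolynomial (Fin (n + 1)) O), h • f = τ h • f)
    (htri : ∀ h (i : Fin n), τ h i.succ 0 = 0) {w : H → MvPolynomial (Fin (n + 1)) O}
    [Algebra.IsIntegral O (MvPolynomial (Fin (n + 1)) O ⧸
      (classAnnihilator B w).map (algebraMap B (MvPolynomial (Fin (n + 1)) O)))] :
    IsCoboundary₁ w := by
  have := Fintype.ofFinite H
  have := Algebra.IsInvariant.isIntegral B (MvPolynomial (Fin (n + 1)) O) H
  set T : MvPolynomial (Fin (n + 1)) O := ∏ h : H, h • X 0 with hTdef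
  have hT : ∀ h : H, h • T = T := fun h => by
    rw [hTdef, Finset.smul_prod']
    simp only [smul_smul]
    exact Fintype.prod_equiv (Equiv.mulLeft h) _ _ fun _ => rfl
  obtain ⟨hdeg, hlead⟩ := isUnit_leadingCoeff_finSuccEquiv_prod_smul (H := H) hτ htri
  obtain ⟨p, hp, hpT⟩ := Algebra.IsIntegral.isIntegral (R := O) (Ideal.Quotient.mk
    ((classAnnihilator B w).map (algebraMap B (MvPolynomial (Fin (n + 1)) O))) T)
  have hpT' : Polynomial.aeval T p ∈ (classAnnihilator B w).map (algebraMap B _) := by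
    rw [← Ideal.Quotient.eq_zero_iff_mem, ← hpT]
    exact (Polynomial.aeval_algHom_apply (Ideal.Quotient.mkₐ O _) T p).symm
  have hF : ∀ h : H, h • Polynomial.aeval T p = Polynomial.aeval T p := fun h => by
    rw [hτ]
    exact (Polynomial.aeval_algHom_apply (bind₁ _) T p).symm.trans
      (congrArg (Polynomial.aeval · p) ((hτ h T).symm.trans (hT h)))
  obtain ⟨b, hb⟩ := Algebra.IsInvariant.isInvariant (A := B) (G := H) _ hF
  rw [← hb] at hpT'
  obtain ⟨k, hk⟩ := mem_radical_of_algebraMap_mem_map hpT'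
  refine isCoboundary₁_of_mul_of_isUnit_leadingCoeff hτ htri (F := Polynomial.aeval T p ^ k)
    (fun h => by rw [smul_pow', hF]) ?_ ?_
  · rw [map_pow, ← Polynomial.aeval_algHom_apply, Polynomial.leadingCoeff_pow,
      leadingCoeff_aeval_of_monic hdeg hp]
    exact (hlead.pow _).pow _
  · convert! mem_classAnnihilator.1 hk using 2
    rw [← hb, ← map_pow, Pi.smul_apply, Algebra.smul_def]

end Triangular

section BaseChange

theorem map_classAnnihilator_le_comap {B B' H R R' : Type*} [CommRing B] [CommRing B'] [CommRing R]
    [CommRing R'] [Group H] [Algebra B R] [Algebra B' R'] [MulSemiringAction H R]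
    [MulSemiringAction H R'] [SMulCommClass H B R] [SMulCommClass H B' R']
    [Algebra.IsInvariant B' R' H] {ψ : R →+* R'} (hψ : ∀ (h : H) x, ψ (h • x) = h • ψ x)
    (w : H → R) :
    (classAnnihilator B w).map (algebraMap B R) ≤
      ((classAnnihilator B' (ψ ∘ w)).map (algebraMap B' R')).comap ψ := by
  refine Ideal.map_le_iff_le_comap.2 fun b ⟨z, hz⟩ => ?_
  obtain ⟨b', hb'⟩ := Algebra.IsInvariant.isInvariant (A := B') (G := H) (ψ (algebraMap B R b))
    fun h => by rw [← hψ, smul_algebraMap]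
  rw [Ideal.mem_comap, Ideal.mem_comap, ← hb']
  refine Ideal.mem_map_of_mem _ ⟨ψ z, fun h => ?_⟩
  rw [← hψ, ← map_sub, hz, Pi.smul_apply, Pi.smul_apply, Algebra.smul_def, Algebra.smul_def, hb',
    map_mul, Function.comp_apply]

variable {σ O O' : Type*} [CommRing O] [CommRing O'] [Algebra O O']

/-- The additive map `O'[X_i] → O[X_i]` applying an `O`-linear map `O' → O` to the coefficients. -/
noncomputable def mapCoeff (ret : O' →ₗ[O] O) : MvPolynomial σ O' →+ MvPolynomial σ O :=
  AddMonoidHom.mk' (AddMonoidAlgebra.map (ret : O' →+ O)) (AddMonoidAlgebra.map_add _)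

theorem mapCoeff_C_mul_map (ret : O' →ₗ[O] O) (c : O') (f : MvPolynomial σ O) :
    mapCoeff ret (C c * map (algebraMap O O') f) = C (ret c) * f := by
  ext m
  rw [coeff_C_mul]
  refine (coeff_addMonoidAlgebraMap _ _ m).trans ?_
  rw [coeff_C_mul, coeff_map, mul_comm, ← Algebra.smul_def]
  exact (map_smul ret _ _).trans (mul_comm _ _)

variable [Fintype σ] [DecidableEq σ]

theorem mapCoeff_gl_smul (ret : O' →ₗ[O] O) (g : GL σ O) (f : MvPolynomial σ O') :
    mapCoeff ret (Matrix.GeneralLinearGroup.map (algebraMap O O') g • f) = g • mapCoeff ret f := by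
  induction f using MvPolynomial.induction_on' with
  | monomial s c =>
    have hmonomial : monomial s c = C c * map (algebraMap O O') (monomial s 1) := by
      rw [map_monomial, map_one, C_mul_monomial, mul_one]
    rw [hmonomial, smul_mul', ← map_gl_smul, ← algebraMap_eq, smul_algebraMap, algebraMap_eq,
      mapCoeff_C_mul_map, mapCoeff_C_mul_map, smul_mul', ← algebraMap_eq, smul_algebraMap]
  | add p q hp hq => rw [smul_add, map_add, map_add, smul_add, hp, hq]

theorem isIntegral_quotient_of_gl_smul_map_mem {I : Ideal (MvPolynomial σ O)}
    [Algebra.IsIntegral O (MvPolynomial σ O ⧸ I)] {J : Ideal (MvPolynomial σ O')} (P : GL σ O')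
    (hIJ : I ≤ J.comap ((MulSemiringAction.toRingHom _ _ P).comp (map (algebraMap O O')))) :
    Algebra.IsIntegral O' (MvPolynomial σ O' ⧸ J) := by
  have hP : ∀ f : MvPolynomial σ O', IsIntegral O' (Ideal.Quotient.mk J (P • f)) := fun f => by
    induction f using MvPolynomial.induction_on with
    | C c =>
      rw [← algebraMap_eq, smul_algebraMap]
      exact isIntegral_algebraMap
    | add p q hp hq => simpa only [smul_add, map_add] using hp.add hq
    | mul_X p i hp =>
      rw [smul_mul', map_mul]
      refine hp.mul ?_
      have hX := Algebra.IsIntegral.isIntegral (R := O) (Ideal.Quotient.mk I (X i))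
      have := hX.map_of_comp_eq (algebraMap O O') (Ideal.Quotient.lift I
        ((Ideal.Quotient.mk J).comp
          ((MulSemiringAction.toRingHom _ _ P).comp (map (algebraMap O O'))))
        fun f hf => Ideal.Quotient.eq_zero_iff_mem.2 (hIJ hf)) ?_
      · simpa using this
      · ext c
        rw [RingHom.comp_apply, RingHom.comp_apply, IsScalarTower.algebraMap_apply O
          (MvPolynomial σ O) (MvPolynomial σ O ⧸ I), Ideal.Quotient.algebraMap_eq, algebraMap_eq,
          Ideal.Quotient.lift_mk, RingHom.comp_apply, RingHom.comp_apply, map_C,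
          MulSemiringAction.toRingHom_apply, ← algebraMap_eq, smul_algebraMap]
        rfl
  refine ⟨fun x => ?_⟩
  obtain ⟨f, rfl⟩ := Ideal.Quotient.mk_surjective x
  simpa using hP (P⁻¹ • f)

theorem isCoboundary₁_of_triangular_baseChange {n : ℕ} [IsDomain O'] {B H : Type*} [CommRing B]
    [Algebra B (MvPolynomial (Fin (n + 1)) O)] [Group H] [Finite H]
    [MulSemiringAction H (MvPolynomial (Fin (n + 1)) O)]
    [SMulCommClass H B (MvPolynomial (Fin (n + 1)) O)] {ρ : H →* GL (Fin (n + 1)) O}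
    (hρ : ∀ (h : H) (f : MvPolynomial (Fin (n + 1)) O), h • f = ρ h • f) {ret : O' →ₗ[O] O}
    (hret : ret 1 = 1) (P : GL (Fin (n + 1)) O')
    (htri : ∀ h (i : Fin n),
      (P * Matrix.GeneralLinearGroup.map (algebraMap O O') (ρ h) * P⁻¹) i.succ 0 = 0)
    {w : H → MvPolynomial (Fin (n + 1)) O}
    [Algebra.IsIntegral O (MvPolynomial (Fin (n + 1)) O ⧸
      (classAnnihilator B w).map (algebraMap B (MvPolynomial (Fin (n + 1)) O)))] :
    IsCoboundary₁ w := by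
  let τ : H →* GL (Fin (n + 1)) O' :=
    (MulAut.conj P).toMonoidHom.comp ((Matrix.GeneralLinearGroup.map (algebraMap O O')).comp ρ)
  let : MulSemiringAction H (MvPolynomial (Fin (n + 1)) O') := .compHom _ τ
  let ψ : MvPolynomial (Fin (n + 1)) O →+* MvPolynomial (Fin (n + 1)) O' :=
    (MulSemiringAction.toRingHom _ _ P).comp (map (algebraMap O O'))
  have hψP : ∀ f, ψ f = P • map (algebraMap O O') f := fun _ => rfl
  have hτ : ∀ (h : H) (f : MvPolynomial (Fin (n + 1)) O'), h • f =
    P • Matrix.GeneralLinearGroup.map (algebraMap O O') (ρ h) • P⁻¹ • f := fun h f => by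
    rw [← mul_smul, ← mul_smul]
    rfl
  have hψ : ∀ (h : H) f, ψ (h • f) = h • ψ f := fun h f => by
    rw [hτ, hρ, hψP, hψP, inv_smul_smul, map_gl_smul]
  let B' := FixedPoints.subring (MvPolynomial (Fin (n + 1)) O') H
  have : Algebra.IsInvariant B' (MvPolynomial (Fin (n + 1)) O') H := ⟨fun x hx => ⟨⟨x, hx⟩, rfl⟩⟩
  have := isIntegral_quotient_of_gl_smul_map_mem (O := O) P
    (map_classAnnihilator_le_comap (B := B) (B' := B') hψ w)
  refine isCoboundary₁_of_equivariant_retraction (ι := ψ)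
    (r := (mapCoeff ret).comp (DistribSMul.toAddMonoidHom _ P⁻¹)) (fun h f => ?_) (fun f => ?_)
    (isCoboundary₁_of_triangular (B := B') (τ := τ) (fun _ _ => rfl) htri)
  · change mapCoeff ret (P⁻¹ • h • f) = h • mapCoeff ret (P⁻¹ • f)
    rw [hτ, inv_smul_smul, mapCoeff_gl_smul, hρ]
  · change mapCoeff ret (P⁻¹ • ψ f) = f
    rw [hψP, inv_smul_smul]
    simpa [hret] using mapCoeff_C_mul_map ret 1 f

end BaseChange

section Triangularization

theorem exists_sl_mul_mul_inv_apply_one_zero_eq_zero {R : Type*} [CommRing R] [IsDomain R]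
    [IsBezout R] {z : Matrix (Fin 2) (Fin 2) R} {x : R} (hx : z.charpoly.IsRoot x) :
    ∃ P : SL(2, R), (P.1 * z * P⁻¹.1) 1 0 = 0 := by
  classical
  rw [Polynomial.IsRoot, Matrix.eval_charpoly, ← Matrix.exists_mulVec_eq_zero_iff] at hx
  obtain ⟨v, hv, hzv⟩ := hx
  let := IsBezout.toGCDDomain R
  obtain ⟨a, b, ha, hb, hab⟩ := extract_gcd (v 0) (v 1)
  set d := gcd (v 0) (v 1)
  have hd : d ≠ 0 := by
    rintro h0
    rw [h0, zero_mul] at ha hb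
    exact hv (funext fun i => by fin_cases i <;> assumption)
  obtain ⟨Q, hQ0, hQ1⟩ := (gcd_isUnit_iff a b).1 hab |>.exists_SL2_col 0
  refine ⟨Q⁻¹, mul_left_cancel₀ hd ?_⟩
  have hQ10 : (Q⁻¹).1 1 0 = -b := by simp [Matrix.SpecialLinearGroup.SL2_inv_expl, hQ1]
  have hQ11 : (Q⁻¹).1 1 1 = a := by simp [Matrix.SpecialLinearGroup.SL2_inv_expl, hQ0]
  have h0 := congrFun hzv 0
  have h1 := congrFun hzv 1
  simp only [Matrix.mulVec, dotProduct, Fin.sum_univ_two, ha, hb, Matrix.sub_apply,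
    Matrix.scalar_apply, Matrix.diagonal_apply_eq, Matrix.diagonal_apply_ne _ zero_ne_one,
    Matrix.diagonal_apply_ne _ one_ne_zero, Pi.zero_apply] at h0 h1
  simp only [inv_inv, Matrix.mul_apply, Fin.sum_univ_two, hQ0, hQ1, hQ10, hQ11]
  linear_combination b * h0 - a * h1

theorem apply_one_zero_eq_zero_of_commute {R : Type*} [CommRing R] [NoZeroDivisors R]
    {z g : GL (Fin 2) R} (hz : z 1 0 = 0) (hcenter : z ∉ Subgroup.center (GL (Fin 2) R))
    (hzg : Commute z g) : g 1 0 = 0 := by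
  have hentry : ∀ i j, (z * g).1 i j = (g * z).1 i j := fun i j => by rw [hzg.eq]
  simp only [Units.val_mul, Matrix.mul_apply, Fin.sum_univ_two] at hentry
  contrapose! hcenter
  have h01 : z 0 1 = 0 := (mul_eq_zero.1 (by
    linear_combination hentry 0 0 + g 0 1 * hz : z 0 1 * g 1 0 = 0)).resolve_right hcenter
  have h11 : z 0 0 = z 1 1 := mul_left_cancel₀ hcenter (by
    linear_combination -hentry 1 0 + (g 0 0 - g 1 1) * hz)
  refine Matrix.GeneralLinearGroup.mem_center_iff_val_mem_range_scalar.2 ⟨z 0 0, ?_⟩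
  ext i j
  fin_cases i <;> fin_cases j <;> simp [h01, h11, hz]

theorem commute_of_map_commutator_mem_center {H σ O : Type*} [Group H] [Fintype σ] [DecidableEq σ]
    [CommRing O] (hcard : (Nat.card H).Coprime (Fintype.card σ)) (ρ : H →* GL σ O) {g h : H}
    (hgh : ρ ⁅g, h⁆ ∈ Subgroup.center (GL σ O)) : Commute (ρ g) (ρ h) := by
  obtain ⟨ζ, hζ⟩ := Matrix.GeneralLinearGroup.mem_center_iff_val_mem_range_scalar.1 hgh
  have hdet : Matrix.GeneralLinearGroup.det (ρ ⁅g, h⁆) = 1 := by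
    rw [map_commutatorElement, map_commutatorElement, commutatorElement_eq_one_iff_commute]
    exact Commute.all _ _
  have hpow : ρ ⁅g, h⁆ ^ Fintype.card σ = 1 := Units.ext <| by
    have hζdet : ζ ^ Fintype.card σ = 1 := by
      have hval := congrArg Units.val hdet
      rwa [Matrix.GeneralLinearGroup.val_det_apply, ← hζ, Matrix.scalar_apply,
        Matrix.det_diagonal, Finset.prod_const, Finset.card_univ] at hval
    rw [Units.val_pow_eq_pow_val, ← hζ, ← map_pow, hζdet, map_one, Units.val_one]
  rw [← commutatorElement_eq_one_iff_commute, ← map_commutatorElement, ← pow_one (ρ _), ← hcard,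
    pow_gcd_eq_one]
  exact ⟨by rw [← map_pow, pow_card_eq_one', map_one], hpow⟩

theorem exists_notMem_forall_commutator_mem_of_isPGroup {H : Type*} [Group H] [Finite H] {q : ℕ}
    [Fact q.Prime] (hH : IsPGroup q H) {Z : Subgroup H} [Z.Normal] (hZ : Z ≠ ⊤) :
    ∃ z ∉ Z, ∀ g, ⁅z, g⁆ ∈ Z := by
  have := QuotientGroup.nontrivial_iff.2 hZ
  have := (hH.to_quotient Z).center_nontrivial
  obtain ⟨⟨c, hc⟩, hc1⟩ := exists_ne (1 : Subgroup.center (H ⧸ Z))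
  obtain ⟨z, rfl⟩ := QuotientGroup.mk_surjective c
  refine ⟨z, fun hz => hc1 (Subtype.ext ((QuotientGroup.eq_one_iff z).2 hz)), fun g => ?_⟩
  rw [← QuotientGroup.eq_one_iff, ← QuotientGroup.mk'_apply, map_commutatorElement,
    commutatorElement_eq_one_iff_commute]
  exact (Subgroup.mem_center_iff.1 hc _).symm

end Triangularization

section Extension

theorem exists_linearMap_map_one_eq_one {O O' : Type*} [CommRing O] [IsLocalRing O]
    [CommRing O'] [Nontrivial O'] [Algebra O O'] [Module.Finite O O'] [Module.Free O O'] :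
    ∃ ret : O' →ₗ[O] O, ret 1 = 1 := by
  let b := Module.Free.chooseBasis O O'
  obtain ⟨i, hi⟩ : ∃ i, IsUnit (b.repr 1 i) := by
    by_contra! hnon
    have hone : (1 : O') ∈ (IsLocalRing.maximalIdeal O).map (algebraMap O O') := by
      rw [← b.sum_repr 1]
      refine sum_mem fun i _ => ?_
      rw [Algebra.smul_def]
      exact Ideal.mul_mem_right _ _ (Ideal.mem_map_of_mem _ (hnon i))
    have := Submodule.eq_bot_of_le_smul_of_le_jacobson_bot (IsLocalRing.maximalIdeal O)
      (⊤ : Submodule O O') Module.Finite.fg_top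
      (by rw [Ideal.smul_top_eq_map, (Ideal.eq_top_iff_one _).2 hone]; rfl)
      (IsLocalRing.maximalIdeal_le_jacobson _)
    exact bot_ne_top this.symm
  obtain ⟨c, hc⟩ := hi.exists_left_inv
  exact ⟨c • b.coord i, hc⟩

universe u

theorem exists_finite_extension_aeval_eq_zero {O : Type u} [CommRing O] [IsDomain O]
    [IsDiscreteValuationRing O] [CharZero O] {f : Polynomial O} (hf : f.Monic)
    (hd : f.natDegree ≠ 0) :
    ∃ (O' : Type u) (_ : CommRing O') (_ : IsDomain O') (_ : IsPrincipalIdealRing O')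
      (_ : Algebra O O') (_ : Module.Finite O O') (_ : FaithfulSMul O O') (x : O'),
      Polynomial.aeval x f = 0 := by
  let L := (f.map (algebraMap O (FractionRing O))).SplittingField
  have : CharZero (FractionRing O) := IsFractionRing.charZero O
  have : FaithfulSMul O L := .trans O (FractionRing O) L
  have := IsIntegralClosure.finite O (FractionRing O) L (integralClosure O L)
  have := integralClosure.isDedekindDomain O (FractionRing O) L
  have : IsPrincipalIdealRing (integralClosure O L) := by
    refine .of_finite_maximals <| (IsDedekindDomain.primesOver_finite (IsLocalRing.maximalIdeal O)
      (integralClosure O L)).subset fun Q hQ => ⟨hQ.isPrime, ⟨?_⟩⟩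
    have : Q.IsMaximal := hQ
    exact (IsLocalRing.eq_maximalIdeal (Ideal.isMaximal_comap_of_isIntegral_of_isMaximal Q)).symm
  obtain ⟨x, hx⟩ := (Polynomial.SplittingField.splits
    (f.map (algebraMap O (FractionRing O)))).exists_eval_eq_zero (by
      rw [Polynomial.degree_map, hf.degree_map, Polynomial.degree_eq_natDegree hf.ne_zero]
      exact_mod_cast hd)
  rw [Polynomial.eval_map_algebraMap, Polynomial.aeval_map_algebraMap] at hx
  refine ⟨integralClosure O L, inferInstance, inferInstance, this, inferInstance, inferInstance,
    inferInstance, ⟨x, f, hf, hx⟩, Subtype.ext ?_⟩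
  exact (Polynomial.aeval_algHom_apply (integralClosure O L).val _ f).symm.trans hx

theorem exists_gl_baseChange_apply_one_zero_eq_zero {O : Type u} [CommRing O] [IsDomain O]
    [IsDiscreteValuationRing O] [CharZero O] (S : Set (GL (Fin 2) O)) {z : GL (Fin 2) O}
    (hz : z ∉ Subgroup.center (GL (Fin 2) O)) (hS : ∀ g ∈ S, Commute z g) :
    ∃ (O' : Type u) (_ : CommRing O') (_ : IsDomain O') (_ : Algebra O O')
      (ret : O' →ₗ[O] O) (P : GL (Fin 2) O'), ret 1 = 1 ∧ ∀ g ∈ S,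
        (P * Matrix.GeneralLinearGroup.map (algebraMap O O') g * P⁻¹) 1 0 = 0 := by
  obtain ⟨O', _, _, _, _, _, _, x, hx⟩ := exists_finite_extension_aeval_eq_zero z.1.charpoly_monic
    (by rw [Matrix.charpoly_natDegree_eq_dim, Fintype.card_fin]; exact two_ne_zero)
  obtain ⟨ret, hret⟩ := exists_linearMap_map_one_eq_one (O := O) (O' := O')
  set φ := Matrix.GeneralLinearGroup.map (n := Fin 2) (algebraMap O O')
  rw [← Polynomial.eval_map_algebraMap, ← Matrix.charpoly_map] at hx
  obtain ⟨P₀, hP⟩ := exists_sl_mul_mul_inv_apply_one_zero_eq_zero hx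
  let P : GL (Fin 2) O' := P₀
  refine ⟨O', inferInstance, inferInstance, inferInstance, ret, P, hret, fun g hg => ?_⟩
  have hφ : Function.Injective φ :=
    Units.map_injective (Matrix.map_injective (FaithfulSMul.algebraMap_injective O O'))
  refine apply_one_zero_eq_zero_of_commute (z := P * φ z * P⁻¹) hP (fun hc => hz ?_)
    (((hS g hg).map φ).conj P)
  have hφz := Subgroup.Normal.conj_mem inferInstance _ hc P⁻¹
  simp only [inv_inv, mul_assoc, inv_mul_cancel_left, inv_mul_cancel, mul_one] at hφz
  rw [Subgroup.mem_center_iff] at hφz ⊢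
  exact fun h => hφ (by simpa using hφz (φ h))

theorem exists_gl_baseChange_apply_one_zero_eq_zero_of_isPGroup {O : Type u} [CommRing O]
    [IsDomain O] [IsDiscreteValuationRing O] [CharZero O] {H : Type*} [Group H] [Finite H] {q : ℕ}
    [Fact q.Prime] (hH : IsPGroup q H) (hcomm : q = 2 → ∀ g h : H, Commute g h)
    (ρ : H →* GL (Fin 2) O) :
    ∃ (O' : Type u) (_ : CommRing O') (_ : IsDomain O') (_ : Algebra O O')
      (ret : O' →ₗ[O] O) (P : GL (Fin 2) O'), ret 1 = 1 ∧ ∀ h,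
        (P * Matrix.GeneralLinearGroup.map (algebraMap O O') (ρ h) * P⁻¹) 1 0 = 0 := by
  let Z := (Subgroup.center (GL (Fin 2) O)).comap ρ
  have : Z.Normal := Subgroup.normal_comap ρ
  by_cases hZ : Z = ⊤
  · refine ⟨O, inferInstance, inferInstance, inferInstance, LinearMap.id, 1, rfl, fun h => ?_⟩
    obtain ⟨c, hc⟩ := Matrix.GeneralLinearGroup.mem_center_iff_val_mem_range_scalar.1
      (hZ ▸ Subgroup.mem_top h : h ∈ Z)
    simp [← hc]
  obtain ⟨z, hz, hzcomm⟩ : ∃ z ∉ Z, ∀ h, Commute (ρ z) (ρ h) := by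
    obtain rfl | hq := eq_or_ne q 2
    · obtain ⟨z, hz⟩ := SetLike.exists_not_mem_of_ne_top Z hZ rfl
      exact ⟨z, hz, fun h => (hcomm rfl z h).map ρ⟩
    · obtain ⟨z, hz, hzZ⟩ := exists_notMem_forall_commutator_mem_of_isPGroup hH hZ
      obtain ⟨n, hn⟩ := IsPGroup.iff_card.1 hH
      refine ⟨z, hz, fun h => commute_of_map_commutator_mem_center ?_ ρ (hzZ h)⟩
      rw [hn, Fintype.card_fin]
      exact ((Nat.coprime_primes Fact.out Nat.prime_two).2 hq).pow_left n
  obtain ⟨O', i₁, i₂, i₃, ret, P, hret, hP⟩ :=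
    exists_gl_baseChange_apply_one_zero_eq_zero (Set.range ρ) hz (Set.forall_mem_range.2 hzcomm)
  exact ⟨O', i₁, i₂, i₃, ret, P, hret, Set.forall_mem_range.1 hP⟩

end Extension

section CoprimeQuotients

theorem two_le_height_of_isRelPrime {R : Type*} [CommRing R] [IsDomain R]
    [UniqueFactorizationMonoid R] {a b : R} (ha : a ≠ 0) (hab : IsRelPrime a b) {Q : Ideal R}
    [hQ : Q.IsPrime] (haQ : a ∈ Q) (hbQ : b ∈ Q) : 2 ≤ Q.height := by
  classical
  obtain ⟨l, hla, hlQ⟩ := (hQ.multiset_prod_mem_iff_exists_mem _).1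
    (Q.mem_of_dvd (UniqueFactorizationMonoid.factors_prod ha).symm.dvd haQ)
  have hl := UniqueFactorizationMonoid.prime_of_factor l hla
  have := (Ideal.span_singleton_prime hl.ne_zero).2 hl
  have hlb : ¬l ∣ b := fun h =>
    hl.not_isUnit (hab (UniqueFactorizationMonoid.dvd_of_mem_factors hla) h)
  have hbot : ⊥ < Ideal.span {l} := by
    rw [bot_lt_iff_ne_bot, Ne, Ideal.span_singleton_eq_bot]
    exact hl.ne_zero
  have hlt : Ideal.span {l} < Q := by
    refine lt_of_le_of_ne ((Ideal.span_singleton_le_iff_mem _).2 hlQ) fun h => hlb ?_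
    rw [← Ideal.mem_span_singleton, h]
    exact hbQ
  calc (2 : ℕ∞) = (⊥ : Ideal R).height + 1 + 1 := by rw [Ideal.height_bot]; rfl
    _ ≤ (Ideal.span {l}).height + 1 := by
        gcongr
        exact Ideal.height_add_one_le_of_lt_of_isPrime hbot
    _ ≤ Q.height := Ideal.height_add_one_le_of_lt_of_isPrime hlt

theorem finite_quotient_of_isRelPrime {k R : Type*} [Field k] [CommRing R] [IsDomain R]
    [UniqueFactorizationMonoid R] [Algebra k R] [Algebra.FiniteType k R]
    (hdim : ringKrullDim R ≤ 2) {I : Ideal R} {a b : R} (ha : a ≠ 0) (hab : IsRelPrime a b)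
    (haI : a ∈ I) (hbI : b ∈ I) : Module.Finite k (R ⧸ I) := by
  have : IsNoetherianRing R := Algebra.FiniteType.isNoetherianRing k R
  have : Ring.KrullDimLE 0 (R ⧸ I) := Ring.krullDimLE_zero_iff.2 fun q hq => by
    have hmem : ∀ x ∈ I, x ∈ q.comap (Ideal.Quotient.mk I) := fun x hx => by
      rw [Ideal.mem_comap, Ideal.Quotient.eq_zero_iff_mem.2 hx]
      exact q.zero_mem
    have hheight := two_le_height_of_isRelPrime ha hab (hmem a haI) (hmem b hbI)
    have hmax : (q.comap (Ideal.Quotient.mk I)).IsMaximal := by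
      obtain ⟨M, hM, hle⟩ := Ideal.exists_le_maximal _ (hq.comap (Ideal.Quotient.mk I)).ne_top
      obtain rfl | hlt := hle.eq_or_lt
      · exact hM
      · have hM2 : M.height ≤ 2 := WithBot.coe_le_coe.1 <|
          (Ideal.height_le_ringKrullDim_of_isPrime (I := M)).trans hdim
        exact absurd ((Ideal.height_strict_mono_of_isPrime hlt).trans_le hM2) hheight.not_gt
    rw [← Ideal.map_comap_of_surjective _ Ideal.Quotient.mk_surjective q]
    refine (Ideal.map_eq_top_or_isMaximal_of_surjective _ Ideal.Quotient.mk_surjective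
      hmax).resolve_left ?_
    rw [Ideal.map_comap_of_surjective _ Ideal.Quotient.mk_surjective]
    exact hq.ne_top
  have := isArtinianRing_iff_krullDimLE_zero.2 this
  exact Module.finite_of_isArtinianRing k _

theorem isIntegral_quotient_of_ker_le {O R S : Type*} [CommRing O] [CommRing R] [CommRing S]
    [Algebra O R] [Algebra O S] {f : R →ₐ[O] S} (hf : Function.Surjective f) {I : Ideal R}
    (hker : RingHom.ker f ≤ I) [Algebra.IsIntegral O (S ⧸ I.map f)] :
    Algebra.IsIntegral O (R ⧸ I) := by
  have hI : I = (I.map f).comap f := by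
    rw [Ideal.comap_map_of_surjective _ hf, left_eq_sup]
    exact hker
  exact .of_injective (Ideal.quotientMapₐ (I := I) (I.map f) f hI.le)
    (Ideal.quotientMap_injective' (H := hI.le) hI.ge)

theorem ker_map_residue {σ O : Type*} [CommRing O] [IsLocalRing O] {π : O}
    (hπ : IsLocalRing.maximalIdeal O = Ideal.span {π}) :
    RingHom.ker (map (σ := σ) (IsLocalRing.residue O)) = Ideal.span {C π} := by
  rw [ker_map, IsLocalRing.ker_residue, hπ, Ideal.map_span, Set.image_singleton]

theorem isIntegral_quotient_of_isRelPrime_residue {O : Type*} [CommRing O] [IsLocalRing O] {π : O}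
    (hπ : IsLocalRing.maximalIdeal O = Ideal.span {π}) {I : Ideal (MvPolynomial (Fin 2) O)}
    {a b : MvPolynomial (Fin 2) O} (ha : map (IsLocalRing.residue O) a ≠ 0)
    (hab : IsRelPrime (map (IsLocalRing.residue O) a) (map (IsLocalRing.residue O) b))
    (hπI : C π ∈ I) (haI : a ∈ I) (hbI : b ∈ I) :
    Algebra.IsIntegral O (MvPolynomial (Fin 2) O ⧸ I) := by
  let f : MvPolynomial (Fin 2) O →ₐ[O] MvPolynomial (Fin 2) (IsLocalRing.ResidueField O) :=
    mapAlgHom (Algebra.ofId O _)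
  have hfinite : Module.Finite (IsLocalRing.ResidueField O) (_ ⧸ I.map f) := by
    refine finite_quotient_of_isRelPrime ?_ ha hab (Ideal.mem_map_of_mem f haI)
      (Ideal.mem_map_of_mem f hbI)
    rw [MvPolynomial.ringKrullDim_of_isNoetherianRing]
    simp [ringKrullDim_eq_zero_of_field]
  have : Module.Finite O (_ ⧸ I.map f) := .trans (IsLocalRing.ResidueField O) _
  refine isIntegral_quotient_of_ker_le (f := f)
    (map_surjective _ IsLocalRing.residue_surjective) ?_
  exact (ker_map_residue hπ).trans_le ((Ideal.span_singleton_le_iff_mem I).2 hπI)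

end CoprimeQuotients

section SylowReduction

theorem exists_prime_forall_isUnit_natCast (O : Type*) [CommRing O] [IsLocalRing O] :
    ∃ q : ℕ, q.Prime ∧ ∀ n : ℕ, ¬q ∣ n → IsUnit (n : O) := by
  let k := IsLocalRing.ResidueField O
  obtain ⟨p, hp⟩ := CharP.exists k
  have hunit : ∀ n : ℕ, ¬p ∣ n → IsUnit (n : O) := fun n hn => by
    rwa [← IsLocalRing.residue_ne_zero_iff_isUnit, map_natCast, Ne, CharP.cast_eq_zero_iff k p]
  obtain hp | rfl := CharP.char_is_prime_or_zero k p
  · exact ⟨p, hp, hunit⟩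
  · refine ⟨2, Nat.prime_two, fun n hn => hunit n fun h0 => hn ?_⟩
    rw [zero_dvd_iff.1 h0]
    exact dvd_zero 2

theorem classAnnihilator_le_restrict {B G M : Type*} [CommRing B] [Group G] [AddCommGroup M]
    [Module B M] [DistribMulAction G M] [SMulCommClass G B M] (H : Subgroup G) (w : G → M) :
    classAnnihilator B w ≤ classAnnihilator B fun h : H => w h :=
  fun _ ⟨z, hz⟩ => ⟨z, fun h => hz h⟩

theorem isIntegral_quotient_of_le {O R : Type*} [CommRing O] [CommRing R] [Algebra O R]
    {I J : Ideal R} (h : I ≤ J) [Algebra.IsIntegral O (R ⧸ I)] : Algebra.IsIntegral O (R ⧸ J) :=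
  .of_surjective (Ideal.Quotient.factorₐ O h) (Ideal.Quotient.factor_surjective h)

theorem isCoboundary₁_of_isPGroup {O B H : Type*} [CommRing O] [IsDomain O]
    [IsDiscreteValuationRing O] [CharZero O] [CommRing B] [Algebra B (MvPolynomial (Fin 2) O)]
    [Group H] [Finite H] {q : ℕ} [Fact q.Prime] (hH : IsPGroup q H)
    (hcomm : q = 2 → ∀ g h : H, Commute g h) [MulSemiringAction H (MvPolynomial (Fin 2) O)]
    [SMulCommClass H B (MvPolynomial (Fin 2) O)] {ρ : H →* GL (Fin 2) O}
    (hρ : ∀ (h : H) (f : MvPolynomial (Fin 2) O), h • f = ρ h • f)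
    {w : H → MvPolynomial (Fin 2) O}
    [Algebra.IsIntegral O (MvPolynomial (Fin 2) O ⧸
      (classAnnihilator B w).map (algebraMap B (MvPolynomial (Fin 2) O)))] :
    IsCoboundary₁ w := by
  obtain ⟨O', _, _, _, ret, P, hret, htri⟩ :=
    exists_gl_baseChange_apply_one_zero_eq_zero_of_isPGroup hH hcomm ρ
  exact isCoboundary₁_of_triangular_baseChange (B := B) hρ hret P fun h i => by
    rw [Subsingleton.elim i 0]
    exact htri h

theorem isCoboundary₁_of_sylow_two_commute {O B : Type*} [CommRing O] [IsDomain O]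
    [IsDiscreteValuationRing O] [CharZero O] {G : Subgroup (GL (Fin 2) O)} [Finite G]
    (hG : ∀ (S : Sylow 2 G) (g h : S), Commute g h) [CommRing B]
    [Algebra B (MvPolynomial (Fin 2) O)] [SMulCommClass G B (MvPolynomial (Fin 2) O)]
    {w : G → MvPolynomial (Fin 2) O} (hw : IsCocycle₁ w)
    [Algebra.IsIntegral O (MvPolynomial (Fin 2) O ⧸
      (classAnnihilator B w).map (algebraMap B (MvPolynomial (Fin 2) O)))] :
    IsCoboundary₁ w := by
  obtain ⟨q, hq, hunit⟩ := exists_prime_forall_isUnit_natCast O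
  have : Fact q.Prime := ⟨hq⟩
  let Q : Sylow q G := default
  have := isIntegral_quotient_of_le (O := O) (Ideal.map_mono
    (f := algebraMap B (MvPolynomial (Fin 2) O))
    (classAnnihilator_le_restrict (B := B) (Q : Subgroup G) w))
  refine isCoboundary₁_of_index_isUnit (k := O) (Q : Subgroup G) (hunit _ Q.not_dvd_index) hw ?_
  exact isCoboundary₁_of_isPGroup (B := B) Q.isPGroup' (fun hq2 => by subst hq2; exact hG Q)
    (ρ := G.subtype.comp (Q : Subgroup G).subtype) fun _ _ => rfl

end SylowReduction

section Invariants

variable {A : Type*} [CommRing A] {n : ℕ}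

theorem mem_glInvariants_iff {G : Subgroup (GL (Fin n) A)} {f : MvPolynomial (Fin n) A} :
    f ∈ glInvariants G ↔ ∀ g : G, g • f = f := by
  have haeval : ∀ g : GL (Fin n) A,
      aeval (fun i => ∑ j, (g : Matrix (Fin n) (Fin n) A) i j • X j) f = g⁻¹ • f := fun g => by
    rw [gl_smul_def, inv_inv, ← aeval_eq_bind₁]
    congr 2
    funext i
    simp [Matrix.toMvPolynomial, smul_eq_C_mul, C_mul_X_eq_monomial]
  refine ⟨fun hf g => ?_, fun hf g hg => ?_⟩
  · have := (haeval (g⁻¹ : G)).symm.trans (hf _ (g⁻¹).2)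
    rwa [Subgroup.coe_inv, inv_inv] at this
  · exact (haeval g).trans (hf ⟨g⁻¹, inv_mem hg⟩)

variable (G : Subgroup (GL (Fin n) A))

instance : SMulCommClass G (glInvariants G) (MvPolynomial (Fin n) A) where
  smul_comm g b f := by
    rw [Algebra.smul_def, smul_mul', Algebra.smul_def]
    congr 1
    exact mem_glInvariants_iff.1 b.2 g

instance : Algebra.IsInvariant (glInvariants G) (MvPolynomial (Fin n) A) G where
  isInvariant f hf := ⟨⟨f, mem_glInvariants_iff.2 hf⟩, rfl⟩

variable [Finite G]

instance : Algebra.IsIntegral (glInvariants G) (MvPolynomial (Fin n) A) :=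
  Algebra.IsInvariant.isIntegral _ _ G

variable [IsNoetherianRing A]

instance : IsNoetherianRing (glInvariants G) := by
  have : Algebra.FiniteType (glInvariants G) (MvPolynomial (Fin n) A) :=
    .of_restrictScalars_finiteType A _ _
  have hfinite : Module.Finite (glInvariants G) (MvPolynomial (Fin n) A) :=
    Algebra.IsIntegral.finite
  have : Algebra.FiniteType A (glInvariants G) :=
    ⟨fg_of_fg_of_fg A _ (MvPolynomial (Fin n) A) Algebra.FiniteType.out hfinite.fg_top
      Subtype.val_injective⟩
  exact Algebra.FiniteType.isNoetherianRing A _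

variable {G}

theorem height_glInvariants_le (P : Ideal (glInvariants G)) [P.IsPrime] :
    P.height ≤ ringKrullDim A + n := by
  obtain ⟨Q, _, ⟨rfl⟩⟩ := Ideal.nonempty_primesOver (S := MvPolynomial (Fin n) A) P
  refine (WithBot.coe_le_coe.2 (height_under_of_isInvariant G Q).le).trans ?_
  refine Ideal.height_le_ringKrullDim_of_isPrime.trans ?_
  rw [MvPolynomial.ringKrullDim_of_isNoetherianRing, Nat.card_fin]

end Invariants

section LocalCase

variable {O : Type*} [CommRing O] [IsDomain O] {G : Subgroup (GL (Fin 2) O)} [Finite G]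
  {P : Ideal (glInvariants G)} [P.IsPrime]

theorem hasGradeEqHeight_of_isField (hO : IsField O) : HasGradeEqHeight P := by
  let := hO.toField
  refine hasGradeEqHeight_of_height_le_two (R := MvPolynomial (Fin 2) O) G
    (WithBot.coe_le_coe.1 ((height_glInvariants_le P).trans ?_))
  rw [ringKrullDim_eq_zero_of_isField hO, zero_add]
  rfl

variable [IsDiscreteValuationRing O]

theorem isCoboundary₁_of_isRelPrime_residue [CharZero O]
    (hG : ∀ (S : Sylow 2 G) (g h : S), Commute g h) {π : O}
    (hπ : IsLocalRing.maximalIdeal O = Ideal.span {π}) {a b : glInvariants G}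
    (ha : map (IsLocalRing.residue O) (a : MvPolynomial (Fin 2) O) ≠ 0)
    (hab : IsRelPrime (map (IsLocalRing.residue O) (a : MvPolynomial (Fin 2) O))
      (map (IsLocalRing.residue O) (b : MvPolynomial (Fin 2) O)))
    {w : G → MvPolynomial (Fin 2) O} (hw : IsCocycle₁ w)
    (hle : Ideal.span {algebraMap O _ π, a, b} ≤ classAnnihilator (glInvariants G) w) :
    IsCoboundary₁ w := by
  have hmem := fun x (hx : x ∈ ({algebraMap O _ π, a, b} : Set (glInvariants G))) =>
    Ideal.mem_map_of_mem (algebraMap _ (MvPolynomial (Fin 2) O)) (hle (Ideal.subset_span hx))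
  have := isIntegral_quotient_of_isRelPrime_residue hπ ha hab (hmem _ (.inl rfl))
    (hmem a (by simp)) (hmem b (by simp))
  exact isCoboundary₁_of_sylow_two_commute (B := glInvariants G) hG hw

theorem height_glInvariants_le_three : P.height ≤ 3 :=
  WithBot.coe_le_coe.1 <| (height_glInvariants_le P).trans <|
    add_le_add_left (Ring.krullDimLE_iff.1 (inferInstance : Ring.KrullDimLE 1 O)) 2

theorem hasGradeEqHeight_of_isDiscreteValuationRing [CharZero O]
    (hG : ∀ (S : Sylow 2 G) (g h : S), Commute g h)
    (hP : (IsLocalRing.maximalIdeal O).map (algebraMap O (glInvariants G)) ≤ P) :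
    HasGradeEqHeight P := by
  obtain hle | hlt := le_or_gt P.height 2
  · exact hasGradeEqHeight_of_height_le_two (R := MvPolynomial (Fin 2) O) G hle
  obtain ⟨π, hπ⟩ := IsDiscreteValuationRing.exists_irreducible O
  have hmax := hπ.maximalIdeal_eq
  have hπ_ne : algebraMap O (glInvariants G) π ≠ 0 :=
    (map_ne_zero_iff _ (FaithfulSMul.algebraMap_injective O _)).2 hπ.ne_zero
  have hπP := hP (Ideal.mem_map_of_mem _ (hmax ▸ Ideal.mem_span_singleton_self π))
  have hsurj := map_surjective (σ := Fin 2) (IsLocalRing.residue O) IsLocalRing.residue_surjective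
  obtain ⟨a, haP, b, hbP, hreg⟩ := exists_isWeaklyRegular_triple_of_two_lt_height G hlt
    hsurj hπ_ne (ker_map_residue hmax)
    fun _ _ ha hab _ hw => isCoboundary₁_of_isRelPrime_residue hG hmax ha hab hw
  exact ⟨[algebraMap O _ π, a, b], by simp [hπP, haP, hbP], hreg,
    (Order.add_one_le_of_lt hlt).antisymm height_glInvariants_le_three⟩

end LocalCase

section CohenMacaulay

theorem isCohenMacaulayLocalRing_of_ringEquiv {R S : Type*} [CommRing R] [CommRing S]
    [IsLocalRing R] [IsLocalRing S] (e : R ≃+* S) (hR : IsCohenMacaulayLocalRing R) :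
    IsCohenMacaulayLocalRing S := by
  obtain ⟨n, rs, hdim, hlength, hmem, hreg⟩ := hR
  refine ⟨n, rs.map e, (ringKrullDim_eq_of_ringEquiv e).symm.trans hdim,
    (List.length_map _).trans hlength, List.forall_mem_map.2 fun x hx => ?_, ?_⟩
  · exact fun h => hmem x hx ((MulEquiv.isUnit_map e).1 h)
  · exact (AddEquiv.isRegular_congr (e := e.toAddEquiv) (List.forall₂_map_right_iff.2 <|
      List.forall₂_same.2 fun r _ x => e.map_mul r x)).1 hreg

theorem HasGradeEqHeight.isCohenMacaulayLocalRing {B : Type*} [CommRing B] {P : Ideal B}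
    [P.IsPrime] (hP : HasGradeEqHeight P) :
    IsCohenMacaulayLocalRing (Localization.AtPrime P) := by
  obtain ⟨rs, hmem, hreg, hlength⟩ := hP
  refine ⟨rs.length, rs.map (algebraMap B _), ?_, List.length_map _,
    List.forall_mem_map.2 fun x hx => ?_, hreg.isRegular_of_isLocalization_of_mem _ P hmem⟩
  · rw [IsLocalization.AtPrime.ringKrullDim_eq_height P, ← hlength]
    rfl
  · exact (IsLocalization.AtPrime.to_map_mem_maximal_iff _ P x).2 (hmem x hx)

theorem isCohenMacaulayLocalRing_localization_of_under_eq {B B' : Type*} [CommRing B] [CommRing B']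
    [Algebra B B'] (M : Submonoid B) [IsLocalization M B'] {P : Ideal B} [P.IsPrime] {Q : Ideal B'}
    [Q.IsPrime] (hQ : Q.under B = P) (hcm : IsCohenMacaulayLocalRing (Localization.AtPrime Q)) :
    IsCohenMacaulayLocalRing (Localization.AtPrime P) := by
  subst hQ
  have := IsLocalization.isLocalization_isLocalization_atPrime_isLocalization (M := M)
    (Localization.AtPrime Q) Q
  exact isCohenMacaulayLocalRing_of_ringEquiv (IsLocalization.algEquiv
    (Q.under B).primeCompl (Localization.AtPrime Q) _).toRingEquiv hcm

end CohenMacaulay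

section Localization

theorem sylow_commute_of_mulEquiv {p : ℕ} {G H : Type*} [Group G] [Group H] (e : G ≃* H)
    (hG : ∀ (S : Sylow p G) (g h : S), Commute g h) (S : Sylow p H) (g h : S) : Commute g h := by
  have hmem : ∀ x : S, e.symm x ∈ S.comapOfInjective e.toMonoidHom e.injective
      fun y _ => e.surjective y := fun x => by
    change e (e.symm x) ∈ S
    simp
  have hcomm := congrArg Subtype.val (hG _ ⟨_, hmem g⟩ ⟨_, hmem h⟩).eq
  exact Subtype.ext (e.symm.injective
    ((map_mul e.symm _ _).trans (hcomm.trans (map_mul e.symm _ _).symm)))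

variable {A : Type*} (O : Type*) [CommRing A] [CommRing O] [Algebra A O] {n : ℕ}
  (G : Subgroup (GL (Fin n) A))

/-- The base change to `O` of a subgroup of `GL_n(A)`. -/
abbrev glBaseChange : Subgroup (GL (Fin n) O) :=
  G.map (Matrix.GeneralLinearGroup.map (algebraMap A O))

/-- The ring of invariants over `O` as an algebra over the ring of invariants over `A`, by applying
`algebraMap A O` to the coefficients. -/
noncomputable abbrev glInvariantsAlgebra :
    Algebra (glInvariants G) (glInvariants (glBaseChange O G)) :=
  RingHom.toAlgebra <| ((map (algebraMap A O)).comp (glInvariants G).val.toRingHom).codRestrict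
    (glInvariants (glBaseChange O G)) fun f => mem_glInvariants_iff.2 <| by
      rintro ⟨_, g, hg, rfl⟩
      exact (map_gl_smul _ g _).symm.trans (congrArg _ (mem_glInvariants_iff.1 f.2 ⟨g, hg⟩))

attribute [local instance] glInvariantsAlgebra algebraMvPolynomial

instance : IsScalarTower A (glInvariants G) (glInvariants (glBaseChange O G)) :=
  .of_algebraMap_eq fun a => Subtype.ext (map_C (algebraMap A O) a).symm

theorem isLocalization_glInvariants (M : Submonoid A) [IsLocalization M O]
    (hM : M ≤ nonZeroDivisors A) :
    IsLocalization (Algebra.algebraMapSubmonoid (glInvariants G) M)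
      (glInvariants (glBaseChange O G)) := by
  have hinj : Function.Injective (map (σ := Fin n) (algebraMap A O)) :=
    map_injective _ (IsLocalization.injective O hM)
  refine ⟨?_, fun z => ?_, fun {x y} hxy => ⟨1, ?_⟩⟩
  · rintro ⟨_, m, hm, rfl⟩
    rw [← IsScalarTower.algebraMap_apply, IsScalarTower.algebraMap_apply A O]
    exact (IsLocalization.map_units O ⟨m, hm⟩).map _
  · obtain ⟨⟨f, ⟨_, m, hm, rfl⟩⟩, hf⟩ := IsLocalization.surj (M.map (C (σ := Fin n)))
      (z : MvPolynomial (Fin n) O)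
    have hf' : ((z * algebraMap O _ (algebraMap A O m) : glInvariants (glBaseChange O G)) :
        MvPolynomial (Fin n) O) = map (algebraMap A O) f :=
      (congrArg _ (map_C _ m).symm).trans hf
    have hfix : ∀ g : G, g • f = f := fun g => hinj <| by
      have := mem_glInvariants_iff.1 (z * algebraMap O _ (algebraMap A O m)).2 ⟨_, g, g.2, rfl⟩
      rw [hf'] at this
      exact (map_gl_smul _ _ f).trans this
    refine ⟨⟨⟨f, mem_glInvariants_iff.2 hfix⟩, ⟨_, m, hm, rfl⟩⟩, ?_⟩
    rw [← IsScalarTower.algebraMap_apply, IsScalarTower.algebraMap_apply A O]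
    exact Subtype.ext hf'
  · rw [Subtype.ext (hinj (congrArg Subtype.val hxy))]

variable {G}

instance [Finite G] : Finite (glBaseChange O G) :=
  Set.Finite.image _ (Set.toFinite (G : Set (GL (Fin n) A)))

theorem isCohenMacaulayLocalRing_localization_glInvariants [IsDomain A]
    {P : Ideal (glInvariants G)} [P.IsPrime]
    (h : ∀ Q : Ideal (glInvariants (glBaseChange (Localization.AtPrime (P.under A)) G)),
      Q.IsPrime → (IsLocalRing.maximalIdeal (Localization.AtPrime (P.under A))).map
        (algebraMap _ _) ≤ Q → HasGradeEqHeight Q) :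
    IsCohenMacaulayLocalRing (Localization.AtPrime P) := by
  let p := P.under A
  let O := Localization.AtPrime p
  let M := Algebra.algebraMapSubmonoid (glInvariants G) p.primeCompl
  have : IsLocalization M (glInvariants (glBaseChange O G)) :=
    isLocalization_glInvariants O G _ p.primeCompl_le_nonZeroDivisors
  let Q := P.map (algebraMap (glInvariants G) (glInvariants (glBaseChange O G)))
  have hdisj : Disjoint (M : Set (glInvariants G)) P := by
    rw [Set.disjoint_left]
    rintro _ ⟨m, hm, rfl⟩ h
    exact hm h
  have hQ : Q.IsPrime := IsLocalization.isPrime_of_isPrime_disjoint M _ P ‹_› hdisj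
  have hQP : Q.under (glInvariants G) = P :=
    IsLocalization.under_map_of_isPrime_disjoint M _ ‹_› hdisj
  refine isCohenMacaulayLocalRing_localization_of_under_eq M hQP
    (h Q hQ ?_).isCohenMacaulayLocalRing
  rw [← Localization.AtPrime.map_eq_maximalIdeal, Ideal.map_map,
    ← IsScalarTower.algebraMap_eq, IsScalarTower.algebraMap_eq A (glInvariants G), ← Ideal.map_map]
  exact Ideal.map_mono Ideal.map_comap_le

end Localization

theorem mixed_char_invariants_cohenMacaulay_general {A : Type*} [CommRing A] [IsDedekindDomain A]
    [CharZero A] (G : Subgroup (GL (Fin 2) A)) [Finite G]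
    (hG : ∀ (P : Sylow 2 G) (g h : P), Commute g h) : IsCohenMacaulayRing (glInvariants G) := by
  refine ⟨inferInstance, fun P _ => ?_⟩
  let p := P.under A
  let O := Localization.AtPrime p
  have hinj : Function.Injective (algebraMap A O) :=
    IsLocalization.injective O p.primeCompl_le_nonZeroDivisors
  have : IsDomain O := IsLocalization.isDomain_localization p.primeCompl_le_nonZeroDivisors
  refine isCohenMacaulayLocalRing_localization_glInvariants fun Q _ hQ => ?_
  by_cases hp : p = ⊥
  · refine hasGradeEqHeight_of_isField (O := O) ?_
    rw [IsLocalRing.isField_iff_maximalIdeal_eq, ← Localization.AtPrime.map_eq_maximalIdeal,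
      Ideal.map_eq_bot_iff_of_injective hinj, hp]
  · have := IsLocalization.AtPrime.isDiscreteValuationRing_of_dedekind_domain A hp O
    have : CharZero O := charZero_of_injective_algebraMap hinj
    exact hasGradeEqHeight_of_isDiscreteValuationRing (sylow_commute_of_mulEquiv
      (G.equivMapOfInjective _ (Units.map_injective (Matrix.map_injective hinj))) hG) hQ

open NumberField in
/-- **Mixed characteristic case.** Let `A` be the ring of integers of a number field `K`.
Let `G ⊆ GL_2(A)` be a finite group acting linearly on `R = A[X, Y]` (fixing `A`). Assume
that for every prime `p` dividing `|G|`, every Sylow `p`-subgroup of `G` has exponent `p`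
(i.e. every non-identity element has order `p`). Then `R^G` is Cohen–Macaulay. -/
theorem mixed_char_invariants_cohenMacaulay
    (K : Type) [Field K] [NumberField K]
    (G : Subgroup (Matrix.GeneralLinearGroup (Fin 2) (𝓞 K))) [Finite ↥G]
    (hexp : ∀ p : ℕ, p.Prime → p ∣ Nat.card ↥G →
      ∀ (P : Sylow p ↥G) (x : ↥(P : Subgroup ↥G)), x ≠ 1 → orderOf x = p) :
    IsCohenMacaulayRing ↥(glInvariants G) := by
  refine mixed_char_invariants_cohenMacaulay_general G fun P => ?_
  obtain hcard | hdvd := P.isPGroup'.card_eq_or_dvd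
  · have := (Nat.card_eq_one_iff_unique.1 hcard).1
    exact fun g h => Subsingleton.elim _ _
  · refine Commute.of_orderOf_dvd_two fun x => ?_
    obtain rfl | hx := eq_or_ne x 1
    · simp
    · rw [hexp 2 Nat.prime_two (hdvd.trans (Subgroup.card_subgroup_dvd_card _)) P x hx]
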